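/- arXiv:2301.12567 — 2 statements merged into one kernel-verified Lean document; each statement's English description precedes it below -/
import Mathlib

section
/- Let m ≥ -1/2 and ω_j := √(j⁴ + m j²) for integers j ≥ 1. Then for all integers i > j ≥ 1, one has 2(ω_i − ω_j) ≥ (3/2)·√(4+m). -/
/-!
Since `ω_k = k √(k² + m)`, replacing `√(j² + m)` by the larger `√(i² + m)` in `ω_j` gives
`ω_i - ω_j > (i - j) √(i² + m) ≥ √(4 + m)`. The constant `1` in front of `√(4 + m)`, which improves
on `3/4`, is optimal: `(ω_2 - ω_1) / √(4 + m) = 2 - √((1 + m) / (4 + m)) → 1` as `m → ∞`.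
-/

/-- Linear frequencies `ω_j = √(j⁴ + m j²)` of the hinged beam. -/
noncomputable def beamOmega (m : ℝ) (j : ℕ) : ℝ :=
  Real.sqrt ((j : ℝ) ^ 4 + m * (j : ℝ) ^ 2)

theorem beamOmega_eq_mul_sqrt (m : ℝ) (k : ℕ) : beamOmega m k = k * √((k : ℝ) ^ 2 + m) := by
  have factor : (k : ℝ) ^ 4 + m * (k : ℝ) ^ 2 = (k : ℝ) ^ 2 * ((k : ℝ) ^ 2 + m) := by ring
  rw [beamOmega, factor, Real.sqrt_mul (sq_nonneg _), Real.sqrt_sq k.cast_nonneg]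

theorem sub_mul_sqrt_lt_beamOmega_sub {m : ℝ} {i j : ℕ} (hm : 0 ≤ (j : ℝ) ^ 2 + m)
    (hj : 0 < j) (hij : j < i) :
    ((i : ℝ) - j) * √((i : ℝ) ^ 2 + m) < beamOmega m i - beamOmega m j := by
  have sqrt_lt : √((j : ℝ) ^ 2 + m) < √((i : ℝ) ^ 2 + m) :=
    Real.sqrt_lt_sqrt hm (by gcongr)
  calc ((i : ℝ) - j) * √((i : ℝ) ^ 2 + m)
      = i * √((i : ℝ) ^ 2 + m) - j * √((i : ℝ) ^ 2 + m) := sub_mul _ _ _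
    _ < i * √((i : ℝ) ^ 2 + m) - j * √((j : ℝ) ^ 2 + m) := by gcongr
    _ = beamOmega m i - beamOmega m j := by simp only [beamOmega_eq_mul_sqrt]

theorem beam_frequency_gap_general {m : ℝ} {i j : ℕ} (hm : 0 ≤ (j : ℝ) ^ 2 + m)
    (hj : 1 ≤ j) (hij : j < i) : √(4 + m) < beamOmega m i - beamOmega m j := by
  have one_le_sub : (1 : ℝ) ≤ i - j := by
    rw [le_sub_iff_add_le']
    exact_mod_cast hij
  have four_le_sq : (4 : ℝ) ≤ (i : ℝ) ^ 2 := by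
    have two_le : 2 ≤ i := by lia
    exact_mod_cast Nat.pow_le_pow_left two_le 2
  calc √(4 + m) ≤ √((i : ℝ) ^ 2 + m) := by gcongr
    _ ≤ ((i : ℝ) - j) * √((i : ℝ) ^ 2 + m) := le_mul_of_one_le_left (Real.sqrt_nonneg _) one_le_sub
    _ < beamOmega m i - beamOmega m j := sub_mul_sqrt_lt_beamOmega_sub hm hj hij

/-- The gap estimate `2(ω_i - ω_j) ≥ (3/2)√(4+m)` for `i > j ≥ 1`. -/
theorem beam_frequency_gap
    (m : ℝ) (hm : -(1/2) ≤ m)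
    (i j : ℕ) (hj : 1 ≤ j) (hij : j < i) :
    3/2 * Real.sqrt (4 + m) ≤ 2 * (beamOmega m i - beamOmega m j) := by
  have one_le_sq : (1 : ℝ) ≤ (j : ℝ) ^ 2 := one_le_pow₀ (by exact_mod_cast hj)
  linarith [beam_frequency_gap_general (m := m) (by linarith) hj hij, Real.sqrt_nonneg (4 + m)]
end

section
/- Let −1/2 ≤ m < 0 and ω_j := √(j⁴ + m j²) for integers j ≥ 1. Then for all integers i, j, k with 2 ≤ i ≤ j < k, one has |ω_i + ω_j − ω_k| ≥ 0.49·|m|. -/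
theorem beamOmega_le_sq_add_half {m : ℝ} {n : ℕ} (h : 0 ≤ (n : ℝ) ^ 2 + m / 2) :
    beamOmega m n ≤ (n : ℝ) ^ 2 + m / 2 :=
  Real.sqrt_le_iff.mpr ⟨h, by linarith [sq_nonneg m]⟩

theorem sq_add_mul_le_beamOmega {m c : ℝ} {n : ℕ} (hm : m ≤ 0)
    (h : 0 ≤ (2 * c - 1) * (n : ℝ) ^ 2 + c ^ 2 * m) :
    (n : ℝ) ^ 2 + c * m ≤ beamOmega m n := by
  apply Real.le_sqrt_of_sq_le
  calc ((n : ℝ) ^ 2 + c * m) ^ 2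
      = (n : ℝ) ^ 4 + m * (n : ℝ) ^ 2 + m * ((2 * c - 1) * (n : ℝ) ^ 2 + c ^ 2 * m) := by ring
    _ ≤ (n : ℝ) ^ 4 + m * (n : ℝ) ^ 2 :=
      add_le_of_nonpos_right (mul_nonpos_of_nonpos_of_nonneg hm h)

theorem five_le_of_sq_add_sq_eq_sq {i j k : ℕ} (hi : 0 < i) (hj : 0 < j)
    (h : i ^ 2 + j ^ 2 = k ^ 2) : 5 ≤ k := by
  by_contra! hk
  have hik : i < k := lt_of_pow_lt_pow_left₀ 2 k.zero_le (by have := pow_pos hj 2; omega)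
  have hjk : j < k := lt_of_pow_lt_pow_left₀ 2 k.zero_le (by have := pow_pos hi 2; omega)
  interval_cases k <;> interval_cases i <;> interval_cases j <;> omega

theorem beam_sixth_order_nonresonance_neg_general {m : ℝ} (hm : -(3 / 4) ≤ m) (hm₀ : m ≤ 0)
    {i j k : ℕ} (hi : 0 < i) (hj : 0 < j) (hk : 0 < k) :
    0.49 * |m| ≤ |beamOmega m i + beamOmega m j - beamOmega m k| := by
  have one_le_sq {n : ℕ} (hn : 0 < n) : (1 : ℝ) ≤ (n : ℝ) ^ 2 := by
    exact_mod_cast Nat.one_le_pow 2 n hn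
  have upper {n : ℕ} (hn : 0 < n) : beamOmega m n ≤ (n : ℝ) ^ 2 + m / 2 :=
    beamOmega_le_sq_add_half (by linarith [one_le_sq hn])
  have lower {n : ℕ} (hn : 0 < n) : (n : ℝ) ^ 2 + 2 / 3 * m ≤ beamOmega m n :=
    sq_add_mul_le_beamOmega hm₀ (by linarith [one_le_sq hn])
  rw [abs_of_nonpos hm₀]
  rcases lt_trichotomy (i ^ 2 + j ^ 2) (k ^ 2) with hlt | heq | hgt
  · have hN : (i : ℝ) ^ 2 + (j : ℝ) ^ 2 + 1 ≤ (k : ℝ) ^ 2 := by exact_mod_cast hlt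
    exact le_abs.mpr (.inr (by linarith [upper hi, upper hj, lower hk]))
  · have hN : (i : ℝ) ^ 2 + (j : ℝ) ^ 2 = (k : ℝ) ^ 2 := by exact_mod_cast heq
    have hk_sq : (5 : ℝ) ^ 2 ≤ (k : ℝ) ^ 2 := by
      exact_mod_cast Nat.pow_le_pow_left (five_le_of_sq_add_sq_eq_sq hi hj heq) 2
    have lower_k : (k : ℝ) ^ 2 + 0.51 * m ≤ beamOmega m k :=
      sq_add_mul_le_beamOmega hm₀ (by linarith)
    exact le_abs.mpr (.inr (by linarith [upper hi, upper hj]))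
  · have hN : (k : ℝ) ^ 2 + 1 ≤ (i : ℝ) ^ 2 + (j : ℝ) ^ 2 := by exact_mod_cast hgt
    exact le_abs.mpr (.inl (by linarith [lower hi, lower hj, upper hk]))

/-- Lower bound `|ω_i + ω_j - ω_k| ≥ 0.49·|m|` for `2 ≤ i ≤ j < k` and `-1/2 ≤ m < 0`. -/
theorem beam_sixth_order_nonresonance_neg
    (m : ℝ) (hm0 : -(1/2) ≤ m) (hm1 : m < 0)
    (i j k : ℕ) (hi : 2 ≤ i) (hij : i ≤ j) (hjk : j < k) :
    0.49 * |m| ≤ |beamOmega m i + beamOmega m j - beamOmega m k| :=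
  beam_sixth_order_nonresonance_neg_general (by linarith) hm1.le (by omega) (by omega) (by omega)
end
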